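/- Let n ≥ 2, β ≥ 0, and let g : ℝⁿ → [0,∞) be measurable and β-log-concave. For s > 0 set Y(s) := ∫_{ℝⁿ} g(x)^s dx, and when 0 < Y(s) < ∞ let ρ_s(x) := g(x)^s / Y(s). Let T > 0 and T' := T(1 − 1/√n), and suppose Y(1/T), Y(1/T'), and Y(2/T' − 1/T) are all finite and positive. Then ∫_{ℝⁿ} ρ_{1/T'}(x)² / ρ_{1/T}(x) dx ≤ 8 · exp(2β/T'), where the integrand is interpreted as 0 at points where ρ_{1/T}(x) = 0. -/

import Mathlib

open Real MeasureTheory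

lemma bm_compact (K L C : Set ℝ) (hK : IsCompact K) (hL : IsCompact L) (hKn : K.Nonempty)
    (hLn : L.Nonempty) (hC : ∀ a ∈ K, ∀ b ∈ L, a + b ∈ C) :
    volume K + volume L ≤ volume C := by
  obtain ⟨x, hx, hxK⟩ := hK.exists_isGreatest hKn
  obtain ⟨y, hy, hyL⟩ := hL.exists_isLeast hLn
  set A : Set ℝ := (fun z => z + (-y)) ⁻¹' K with hA
  set B : Set ℝ := (fun z => z + (-x)) ⁻¹' L with hB
  have hAv : volume A = volume K := measure_preimage_add_right _ _ _
  have hBv : volume B = volume L := measure_preimage_add_right _ _ _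
  have hBm : MeasurableSet B := (measurable_add_const _) hL.measurableSet
  have hd : Disjoint A (B \ {x + y}) := by
    rw [Set.disjoint_left]
    rintro z hz ⟨hz1, hz2⟩
    have h1 := hxK hz
    have h2 := hyL hz1
    apply hz2
    simp only [Set.mem_singleton_iff]
    linarith
  have hsub : A ∪ (B \ {x + y}) ⊆ C := by
    rintro z (hz | ⟨hz, -⟩)
    · have := hC _ hz _ hy
      simpa using this
    · have := hC _ hx _ hz
      simpa using this
  have hB' : volume (B \ {x + y}) = volume B := measure_sdiff_null (by simp)
  calc volume K + volume L = volume A + volume (B \ {x + y}) := by rw [hB', hAv, hBv]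
    _ = volume (A ∪ (B \ {x + y})) :=
        (measure_union hd (hBm.diff (measurableSet_singleton _))).symm
    _ ≤ _ := measure_mono hsub

lemma bm_meas (A B C : Set ℝ) (hA : MeasurableSet A) (hB : MeasurableSet B) (hAn : A.Nonempty)
    (hBn : B.Nonempty) (hC : ∀ a ∈ A, ∀ b ∈ B, a + b ∈ C) :
    volume A + volume B ≤ volume C := by
  have hBC : volume B ≤ volume C := by
    obtain ⟨a, ha⟩ := hAn
    rw [← measure_preimage_add_right volume (-a) B]
    refine measure_mono fun z hz => ?_
    simpa using hC _ ha _ hz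
  have hAC : volume A ≤ volume C := by
    obtain ⟨a, ha⟩ := hBn
    rw [← measure_preimage_add_right volume (-a) A]
    refine measure_mono fun z hz => ?_
    simpa using hC _ hz _ ha
  have key : ∀ r < volume A, ∀ s < volume B, r + s ≤ volume C := by
    intro r hr s hs
    obtain ⟨K, hKA, hK, hrK⟩ := hA.exists_lt_isCompact hr
    obtain ⟨L, hLB, hL, hsL⟩ := hB.exists_lt_isCompact hs
    refine (add_le_add hrK.le hsL.le).trans (bm_compact K L C hK hL ?_ ?_ ?_)
    · by_contra h
      rw [Set.not_nonempty_iff_eq_empty] at h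
      simp [h] at hrK
    · by_contra h
      rw [Set.not_nonempty_iff_eq_empty] at h
      simp [h] at hsL
    · exact fun a ha b hb => hC a (hKA ha) b (hLB hb)
  have key2 : ∀ r < volume A, r + volume B ≤ volume C := by
    intro r hr
    have : volume B ≤ volume C - r :=
      le_of_forall_lt_imp_le_of_dense fun s hs => by
        have h := key r hr s hs
        rw [add_comm] at h
        exact ENNReal.le_sub_of_add_le_right (ne_top_of_lt hr) h
    rw [add_comm]
    exact add_le_of_le_tsub_right_of_le (hr.le.trans hAC) this
  by_cases hBt : volume B = ⊤
  · rw [hBt] at hBC ⊢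
    simpa using hBC
  have : volume A ≤ volume C - volume B :=
      le_of_forall_lt_imp_le_of_dense fun s hs =>
        ENNReal.le_sub_of_add_le_right hBt (key2 s hs)
  exact add_le_of_le_tsub_right_of_le hBC this

lemma pl_norm (f g h : ℝ → ℝ) (hf : Measurable f) (hg : Measurable g) (hh : Measurable h)
    (f0 : ∀ x, 0 ≤ f x) (g0 : ∀ x, 0 ≤ g x) (h0 : ∀ x, 0 ≤ h x)
    (f1 : ∀ x, f x ≤ 1) (g1 : ∀ x, g x ≤ 1)
    (fs : ∀ t < 1, ∃ x, t < f x) (gs : ∀ t < 1, ∃ x, t < g x)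
    (H : ∀ x y, f x * g y ≤ h (x + y) ^ 2) :
    (∫⁻ x, ENNReal.ofReal (f x)) + (∫⁻ x, ENNReal.ofReal (g x))
      ≤ ∫⁻ x, ENNReal.ofReal (h x) := by
  rw [lintegral_eq_lintegral_meas_lt volume (.of_forall f0) hf.aemeasurable,
    lintegral_eq_lintegral_meas_lt volume (.of_forall g0) hg.aemeasurable,
    lintegral_eq_lintegral_meas_lt volume (.of_forall h0) hh.aemeasurable,
    ← lintegral_add_left]
  · refine setLIntegral_mono' measurableSet_Ioi fun t ht => ?_
    rw [Set.mem_Ioi] at ht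
    by_cases h1 : t < 1
    · refine bm_meas _ _ _ (measurableSet_lt measurable_const hf)
        (measurableSet_lt measurable_const hg) (fs t h1) (gs t h1) ?_
      intro a ha b hb
      simp only [Set.mem_ofPred_eq] at ha hb ⊢
      have := H a b
      have h2 : t * t < f a * g b := mul_lt_mul'' ha hb ht.le ht.le
      nlinarith [h0 (a + b)]
    · have e1 : {a | t < f a} = ∅ := by
        ext a; simp only [Set.mem_ofPred_eq, Set.mem_empty_iff_false, iff_false]
        linarith [f1 a]
      have e2 : {a | t < g a} = ∅ := by
        ext a; simp only [Set.mem_ofPred_eq, Set.mem_empty_iff_false, iff_false]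
        linarith [g1 a]
      simp [e1, e2]
  · refine Antitone.measurable fun s t hst => measure_mono fun a ha => ?_
    exact lt_of_le_of_lt hst ha

lemma four_mul_le (a b : ENNReal) : 4 * (a * b) ≤ (a + b) ^ 2 := by
  by_cases ha : a = ⊤
  · simp [ha]
  by_cases hb : b = ⊤
  · simp [hb]
  lift a to NNReal using ha
  lift b to NNReal using hb
  norm_cast
  rw [← NNReal.coe_le_coe]
  push_cast
  nlinarith [sq_nonneg ((a:ℝ) - b)]

lemma pl_bdd (f g h : ℝ → ENNReal) (hf : Measurable f) (hg : Measurable g) (hh : Measurable h)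
    (N M : NNReal) (fN : ∀ x, f x ≤ N) (gM : ∀ x, g x ≤ M)
    (H : ∀ x y, f x * g y ≤ h (x + y) ^ 2) :
    4 * ((∫⁻ x, f x) * ∫⁻ x, g x) ≤ (∫⁻ x, h x) ^ 2 := by
  obtain ⟨P, hP⟩ : ∃ P, P = ⨆ x, f x := ⟨_, rfl⟩
  obtain ⟨Q, hQ⟩ : ∃ Q, Q = ⨆ x, g x := ⟨_, rfl⟩
  have fP : ∀ x, f x ≤ P := fun x => hP ▸ le_iSup f x
  have gQ : ∀ x, g x ≤ Q := fun x => hQ ▸ le_iSup g x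
  by_cases P0 : P = 0
  · have : ∀ x, f x = 0 := fun x => le_antisymm (P0 ▸ fP x) zero_le
    simp [this]
  by_cases Q0 : Q = 0
  · have : ∀ x, g x = 0 := fun x => le_antisymm (Q0 ▸ gQ x) zero_le
    simp [this]
  have Pt : P ≠ ⊤ := ne_top_of_le_ne_top ENNReal.coe_ne_top (hP ▸ iSup_le fN)
  have Qt : Q ≠ ⊤ := ne_top_of_le_ne_top ENNReal.coe_ne_top (hQ ▸ iSup_le gM)
  obtain ⟨R, hR⟩ : ∃ R : ENNReal, R ^ 2 = P * Q := by
    refine ⟨(P * Q) ^ (1/2 : ℝ), ?_⟩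
    rw [← ENNReal.rpow_natCast, ← ENNReal.rpow_mul]
    norm_num
  have R0 : R ≠ 0 := by
    rintro rfl
    have := hR.symm
    simp [P0, Q0] at this
  have Rt : R ≠ ⊤ := by
    rintro rfl
    have := hR.symm
    simp [ENNReal.mul_eq_top, Pt, Qt] at this
  have sup_aux : ∀ (u : ℝ → ENNReal) (U : ENNReal), U = (⨆ x, u x) → U ≠ 0 → U ≠ ⊤ →
      ∀ t < (1:ℝ), ∃ x, t < (u x / U).toReal := by
    intro u U hU U0 Ut t ht
    have h1 : ENNReal.ofReal t * U < U := by
      calc ENNReal.ofReal t * U < 1 * U := by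
            refine (ENNReal.mul_lt_mul_iff_left U0 Ut).2 ?_
            simpa using ht
        _ = U := one_mul _
    have h2 : ENNReal.ofReal t * U < ⨆ x, u x := by rwa [← hU]
    obtain ⟨x, hx⟩ := lt_iSup_iff.1 h2
    refine ⟨x, ?_⟩
    have hux : u x ≤ U := hU ▸ le_iSup u x
    have h3 : ENNReal.ofReal t < u x / U := by
      rw [ENNReal.lt_div_iff_mul_lt (Or.inl U0) (Or.inl Ut)]
      exact hx
    rcases lt_or_ge t 0 with t0 | t0
    · exact t0.trans_le ENNReal.toReal_nonneg
    · exact (ENNReal.ofReal_lt_iff_lt_toReal t0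
        (ENNReal.div_ne_top (ne_top_of_le_ne_top Ut hux) U0)).1 h3
  have le1 : ∀ (u U : ENNReal), u ≤ U → u / U ≤ 1 := fun u U h => ENNReal.div_le_of_le_mul (by simpa using h)
  have toR1 : ∀ u : ENNReal, u ≤ 1 → u.toReal ≤ 1 := fun u hu => by
    simpa using ENNReal.toReal_mono ENNReal.one_ne_top hu
  have nt : ∀ u : ENNReal, u ≤ 1 → u ≠ ⊤ := fun u hu => ne_top_of_le_ne_top ENNReal.one_ne_top hu
  have main := pl_norm (fun x => (f x / P).toReal) (fun x => (g x / Q).toReal)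
    (fun x => (min (h x / R) 1).toReal) (by fun_prop) (by fun_prop) (by fun_prop)
    (fun _ => ENNReal.toReal_nonneg) (fun _ => ENNReal.toReal_nonneg)
    (fun _ => ENNReal.toReal_nonneg) (fun x => toR1 _ (le1 _ _ (fP x)))
    (fun x => toR1 _ (le1 _ _ (gQ x))) (sup_aux f P hP P0 Pt) (sup_aux g Q hQ Q0 Qt) (by
      intro x y
      rw [← ENNReal.toReal_mul, ← ENNReal.toReal_pow]
      refine ENNReal.toReal_mono (ENNReal.pow_ne_top (nt _ (min_le_right _ _))) ?_
      rcases le_total (h (x + y) / R) 1 with h1 | h1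
      · rw [min_eq_left h1]
        have e1 : f x / P * (g y / Q) = (f x * g y) / R ^ 2 := by
          rw [hR, div_eq_mul_inv, div_eq_mul_inv, div_eq_mul_inv,
            ENNReal.mul_inv (Or.inl P0) (Or.inl Pt)]
          ring
        have e2 : (h (x + y) / R) ^ 2 = h (x + y) ^ 2 / R ^ 2 := by
          rw [div_eq_mul_inv, div_eq_mul_inv, mul_pow, ENNReal.inv_pow]
        rw [e1, e2]
        exact ENNReal.div_le_div_right (H x y) _
      · rw [min_eq_right h1]
        simpa using mul_le_mul' (le1 _ _ (fP x)) (le1 _ _ (gQ y)))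
  have e1 : ∀ x, ENNReal.ofReal (f x / P).toReal = f x / P :=
    fun x => ENNReal.ofReal_toReal (nt _ (le1 _ _ (fP x)))
  have e2 : ∀ x, ENNReal.ofReal (g x / Q).toReal = g x / Q :=
    fun x => ENNReal.ofReal_toReal (nt _ (le1 _ _ (gQ x)))
  have e3 : ∀ x, ENNReal.ofReal (min (h x / R) 1).toReal = min (h x / R) 1 :=
    fun x => ENNReal.ofReal_toReal (nt _ (min_le_right _ _))
  simp only [e1, e2, e3] at main
  have main2 : (∫⁻ x, f x) / P + (∫⁻ x, g x) / Q ≤ (∫⁻ x, h x) / R := by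
    have : ∫⁻ x, min (h x / R) 1 ≤ ∫⁻ x, h x / R := lintegral_mono fun x => min_le_left _ _
    have := main.trans this
    simp only [div_eq_mul_inv] at this ⊢
    rwa [lintegral_mul_const _ hf, lintegral_mul_const _ hg, lintegral_mul_const _ hh] at this
  have main3 := (four_mul_le _ _).trans (pow_le_pow_left' main2 2)
  generalize (∫⁻ x, f x) = a at *
  generalize (∫⁻ x, g x) = b at *
  generalize (∫⁻ x, h x) = c at *
  calc 4 * (a * b) = 4 * (a / P * (b / Q)) * R ^ 2 := by
        rw [hR]
        calc 4 * (a * b) = 4 * ((a / P * P) * (b / Q * Q)) := by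
              rw [ENNReal.div_mul_cancel P0 Pt, ENNReal.div_mul_cancel Q0 Qt]
          _ = _ := by ring
    _ ≤ (c / R) ^ 2 * R ^ 2 := by gcongr
    _ = c ^ 2 := by rw [← mul_pow, ENNReal.div_mul_cancel R0 Rt]

lemma pl_one (f g h : ℝ → ENNReal) (hf : Measurable f) (hg : Measurable g) (hh : Measurable h)
    (H : ∀ x y, f x * g y ≤ h (x + y) ^ 2) :
    4 * ((∫⁻ x, f x) * ∫⁻ x, g x) ≤ (∫⁻ x, h x) ^ 2 := by
  have aux : ∀ u : ℝ → ENNReal, Measurable u →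
      ∫⁻ x, u x = ⨆ N : ℕ, ∫⁻ x, min (u x) ((N : NNReal) : ENNReal) := by
    intro u hu
    rw [← lintegral_iSup]
    · congr 1
      ext x
      refine le_antisymm ?_ (iSup_le fun N => min_le_left _ _)
      refine le_of_forall_lt_imp_le_of_dense fun a ha => ?_
      obtain ⟨N, hN⟩ := ENNReal.exists_nat_gt (ne_top_of_lt ha)
      refine le_trans (le_min ha.le ?_) (le_iSup (fun N : ℕ => min (u x) ((N : NNReal) : ENNReal)) N)
      simpa using hN.le
    · intro N; fun_prop
    · intro N M hNM x
      dsimp only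
      gcongr
  rw [aux f hf, aux g hg]
  simp only [ENNReal.iSup_mul, ENNReal.mul_iSup]
  refine iSup_le fun N => iSup_le fun M => ?_
  refine pl_bdd _ _ h (by fun_prop) (by fun_prop) hh _ _ (fun x => min_le_right _ _)
    (fun x => min_le_right _ _) fun x y => ?_
  exact (mul_le_mul' (min_le_left _ _) (min_le_left _ _)).trans (H x y)

lemma pl_n (n : ℕ) : ∀ (f g h : (Fin n → ℝ) → ENNReal), Measurable f → Measurable g →
    Measurable h → (∀ x y, f x * g y ≤ h (x + y) ^ 2) →
    4 ^ n * ((∫⁻ x, f x) * ∫⁻ x, g x) ≤ (∫⁻ x, h x) ^ 2 := by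
  induction n with
  | zero =>
    intro f g h hf hg hh H
    simp only [lintegral_unique, volume_pi, Measure.pi_univ]
    have := H default default
    rw [Subsingleton.elim (default + default : Fin 0 → ℝ) default] at this
    simp only [Finset.univ_eq_empty, Finset.prod_empty, mul_one, pow_zero, one_mul]
    convert this
  | succ n ih =>
    intro f g h hf hg hh H
    let e := (MeasurableEquiv.piFinSuccAbove (fun _ : Fin (n+1) => ℝ) 0).symm
    have hmp := (volume_preserving_piFinSuccAbove (fun _ : Fin (n+1) => ℝ) 0).symm
    have he : Measurable e := e.measurable
    have hadd : ∀ (s t : ℝ) (x y : Fin n → ℝ), e (s, x) + e (t, y) = e (s + t, x + y) := by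
      intro s t x y
      ext i
      refine Fin.cases ?_ (fun j => ?_) i <;> simp [e]
    have aux : ∀ u : (Fin (n+1) → ℝ) → ENNReal, Measurable u →
        ∫⁻ x, u x = ∫⁻ s : ℝ, ∫⁻ x : Fin n → ℝ, u (e (s, x)) := by
      intro u hu
      rw [← hmp.lintegral_comp hu]
      exact lintegral_prod _ (by fun_prop)
    have am : ∀ u : (Fin (n+1) → ℝ) → ENNReal, Measurable u →
        Measurable fun s : ℝ => ∫⁻ x : Fin n → ℝ, u (e (s, x)) := by
      intro u hu
      exact Measurable.lintegral_prod_right' (f := fun p => u (e p)) (hu.comp he)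
    have key := pl_one (fun s => 2 ^ n * ∫⁻ x : Fin n → ℝ, f (e (s, x)))
      (fun s => 2 ^ n * ∫⁻ x : Fin n → ℝ, g (e (s, x)))
      (fun s => ∫⁻ x : Fin n → ℝ, h (e (s, x))) ((am f hf).const_mul _) ((am g hg).const_mul _)
      (am h hh) (by
        intro s t
        have := ih (fun x => f (e (s, x))) (fun x => g (e (t, x))) (fun x => h (e (s + t, x)))
          (by fun_prop) (by fun_prop) (by fun_prop) (fun x y => by
            rw [← hadd]; exact H _ _)
        refine le_trans (le_of_eq ?_) this
        rw [show (4 : ENNReal) = 2 * 2 by norm_num, mul_pow]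
        ring)
    rw [aux f hf, aux g hg, aux h hh]
    rw [lintegral_const_mul _ (am f hf), lintegral_const_mul _ (am g hg)] at key
    refine le_trans (le_of_eq ?_) key
    rw [pow_succ, show (4 : ENNReal) ^ n = 2 ^ n * 2 ^ n by rw [← mul_pow]; norm_num]
    ring

lemma num_bound (n : ℕ) (hn : 2 ≤ n) : ((n : ℝ) / (n - 1)) ^ n ≤ 8 := by
  obtain ⟨m, rfl⟩ : ∃ m, n = m + 2 := ⟨n - 2, by omega⟩
  push_cast
  have e : ((m : ℝ) + 2) / (m + 2 - 1) = 1 / (m + 1) + 1 := by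
    rw [show (m : ℝ) + 2 - 1 = m + 1 by ring]
    field_simp; ring
  rw [e, pow_succ]
  have h1 : (1 / ((m : ℝ) + 1) + 1) ^ (m + 1) ≤ Real.exp 1 := by
    calc (1 / ((m : ℝ) + 1) + 1) ^ (m + 1) ≤ (Real.exp (1 / ((m : ℝ) + 1))) ^ (m + 1) := by
          gcongr
          exact Real.add_one_le_exp _
      _ = Real.exp 1 := by
          rw [← Real.exp_nat_mul]
          congr 1
          push_cast
          field_simp
  have h2 : 1 / ((m : ℝ) + 1) + 1 ≤ 2 := by
    have : 1 / ((m : ℝ) + 1) ≤ 1 := by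
      rw [div_le_one (by positivity)]
      linarith [(Nat.cast_nonneg m : (0:ℝ) ≤ m)]
    linarith
  have h3 := Real.exp_one_lt_d9
  calc _ ≤ Real.exp 1 * 2 := by gcongr
    _ ≤ 8 := by linarith

lemma lint_scale (n : ℕ) (g : (Fin n → ℝ) → ℝ) (hg0 : ∀ x, 0 ≤ g x) (a r : ℝ) (hr : 0 < r)
    (hi : Integrable (fun x => g x ^ a)) :
    ∫⁻ x, ENNReal.ofReal (g (r⁻¹ • x) ^ a) = ENNReal.ofReal (r ^ n * ∫ x, g x ^ a) := by
  have hi' : Integrable (fun x => g (r⁻¹ • x) ^ a) :=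
    hi.comp_smul (inv_ne_zero hr.ne')
  rw [← ofReal_integral_eq_lintegral_ofReal hi'
    (.of_forall fun x => Real.rpow_nonneg (hg0 _) _)]
  rw [Measure.integral_comp_inv_smul_of_nonneg volume (fun x => g x ^ a) hr.le]
  simp

lemma log_conc (n : ℕ) (β : ℝ) (g : (Fin n → ℝ) → ℝ) (hgm : Measurable g) (hg0 : ∀ x, 0 ≤ g x)
    (hlc : ∀ x y : Fin n → ℝ, ∀ l : ℝ, l ∈ Set.Icc (0:ℝ) 1 →
      Real.exp (-β) * g x ^ l * g y ^ (1 - l) ≤ g (l • x + (1 - l) • y))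
    (a b c : ℝ) (ha : 0 < a) (hc : 0 < c) (hb : 2 * b = a + c)
    (hia : Integrable (fun x => g x ^ a)) (hib : Integrable (fun x => g x ^ b))
    (hic : Integrable (fun x => g x ^ c)) :
    (a * c) ^ n * ((∫ x, g x ^ a) * ∫ x, g x ^ c) ≤
      Real.exp (2 * β * b) * (b ^ 2) ^ n * (∫ x, g x ^ b) ^ 2 := by
  have hb0 : 0 < b := by linarith
  have nn : ∀ s : ℝ, 0 ≤ ∫ x, g x ^ s := fun s => integral_nonneg fun x => Real.rpow_nonneg (hg0 x) s
  have key := pl_n n (fun x => ENNReal.ofReal (g (a⁻¹ • x) ^ a))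
    (fun x => ENNReal.ofReal (g (c⁻¹ • x) ^ c))
    (fun x => ENNReal.ofReal (Real.exp (β * b)) * ENNReal.ofReal (g ((2 * b)⁻¹ • x) ^ b))
    (by fun_prop) (by fun_prop) (by fun_prop) (by
      intro x y
      rw [← ENNReal.ofReal_mul (Real.rpow_nonneg (hg0 _) _), ← ENNReal.ofReal_mul (by positivity),
        ← ENNReal.ofReal_pow (mul_nonneg (by positivity) (Real.rpow_nonneg (hg0 _) _))]
      refine ENNReal.ofReal_le_ofReal ?_
      have h1 := hlc (a⁻¹ • x) (c⁻¹ • y) (a / (2 * b))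
        ⟨by positivity, by rw [div_le_one (by positivity)]; linarith⟩
      have e0 : 1 - a / (2 * b) = c / (2 * b) := by
        field_simp; linarith
      have e1 : (a / (2 * b)) • (a⁻¹ • x) + (1 - a / (2 * b)) • (c⁻¹ • y)
          = (2 * b)⁻¹ • (x + y) := by
        rw [e0, smul_smul, smul_smul, smul_add]
        congr 2 <;> field_simp
      rw [e1, e0] at h1
      set p := g (a⁻¹ • x) with hp
      set q := g (c⁻¹ • y) with hq
      set z := g ((2 * b)⁻¹ • (x + y)) with hz
      have p0 : 0 ≤ p := hg0 _
      have q0 : 0 ≤ q := hg0 _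
      have z0 : 0 ≤ z := hg0 _
      have h2 : p ^ (a / (2 * b)) * q ^ (c / (2 * b)) ≤ Real.exp β * z := by
        calc p ^ (a / (2 * b)) * q ^ (c / (2 * b))
            = Real.exp β * (Real.exp (-β) * p ^ (a / (2 * b)) * q ^ (c / (2 * b))) := by
              rw [← mul_assoc, ← mul_assoc, ← Real.exp_add]; simp
          _ ≤ _ := by gcongr
      have h3 := Real.rpow_le_rpow (by positivity) h2 (by positivity : 0 ≤ 2 * b)
      rw [Real.mul_rpow (by positivity) (by positivity), ← Real.rpow_mul p0, ← Real.rpow_mul q0,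
        Real.mul_rpow (by positivity) z0, ← Real.exp_mul, div_mul_cancel₀ _ (by positivity),
        div_mul_cancel₀ _ (by positivity)] at h3
      refine h3.trans (le_of_eq ?_)
      rw [mul_pow, ← Real.exp_nat_mul, ← Real.rpow_natCast (z ^ b), ← Real.rpow_mul z0]
      push_cast
      congr 2 <;> ring)
  rw [lintegral_const_mul _ (by fun_prop), lint_scale n g hg0 a a ha hia,
    lint_scale n g hg0 c c hc hic, lint_scale n g hg0 b (2 * b) (by positivity) hib] at key
  have na := nn a
  have nb := nn b
  have nc := nn c
  generalize (∫ x, g x ^ a) = A at *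
  generalize (∫ x, g x ^ b) = B at *
  generalize (∫ x, g x ^ c) = C at *
  have e4 : (4 : ENNReal) ^ n = ENNReal.ofReal (4 ^ n) := by
    rw [ENNReal.ofReal_pow (by norm_num)]; norm_num
  rw [e4, ← ENNReal.ofReal_mul (by positivity), ← ENNReal.ofReal_mul (by positivity),
    ← ENNReal.ofReal_mul (by positivity), ← ENNReal.ofReal_pow (by positivity),
    ENNReal.ofReal_le_ofReal_iff (by positivity)] at key
  have e5 : (Real.exp (β * b) * ((2 * b) ^ n * B)) ^ 2
      = 4 ^ n * (Real.exp (2 * β * b) * (b ^ 2) ^ n * B ^ 2) := by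
    rw [show 2 * β * b = β * b + β * b by ring, Real.exp_add,
      show (4 : ℝ) ^ n = 2 ^ n * 2 ^ n by rw [← mul_pow]; norm_num]
    ring
  have e6 : 4 ^ n * (a ^ n * A * (c ^ n * C)) = 4 ^ n * ((a * c) ^ n * (A * C)) := by
    ring
  rw [e5, e6] at key
  exact le_of_mul_le_mul_left key (by positivity)

/-- Backward warmness for the annealing schedule: `‖ρ_{1/T'}/ρ_{1/T}‖ ≤ 8 exp(2β/T')`
where `T' = T(1 − 1/√n)`. -/
theorem warm_backward (n : ℕ) (hn : 2 ≤ n) (β : ℝ) (hβ : 0 ≤ β)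
    (g : (Fin n → ℝ) → ℝ) (hgm : Measurable g) (hg0 : ∀ x, 0 ≤ g x)
    (hlc : ∀ x y : Fin n → ℝ, ∀ l : ℝ, l ∈ Set.Icc (0:ℝ) 1 →
      Real.exp (-β) * g x ^ l * g y ^ (1 - l) ≤ g (l • x + (1 - l) • y))
    (Y : ℝ → ℝ) (hY : ∀ s, Y s = ∫ x, g x ^ s)
    (T T' : ℝ) (hT : 0 < T) (hT' : T' = T * (1 - 1 / Real.sqrt n))
    (hiT : Integrable (fun x => g x ^ (1 / T)))
    (hiT' : Integrable (fun x => g x ^ (1 / T')))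
    (hiTT : Integrable (fun x => g x ^ (2 / T' - 1 / T)))
    (hYT : 0 < Y (1 / T)) (hYT' : 0 < Y (1 / T')) (hYTT : 0 < Y (2 / T' - 1 / T)) :
    ∫ x, (g x ^ (1 / T') / Y (1 / T')) ^ 2 / (g x ^ (1 / T) / Y (1 / T))
      ≤ 8 * Real.exp (2 * β / T') := by
  
  have hn2 : (2:ℝ) ≤ n := by exact_mod_cast hn
  have hs : Real.sqrt n ^ 2 = n := Real.sq_sqrt (by linarith)
  have hs1 : 1 < Real.sqrt n := by
    rw [Real.lt_sqrt (by norm_num)]; linarith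
  set q := Real.sqrt n with hq
  have hq0 : 0 < q := by linarith
  have hr1 : 0 < 1 - 1 / q := by
    rw [sub_pos, div_lt_one hq0]; exact hs1
  have hT'0 : 0 < T' := by rw [hT']; positivity
  have hab : 1 / T < 1 / T' := by
    apply one_div_lt_one_div_of_lt hT'0
    rw [hT']
    have : 0 < 1 / q := by positivity
    nlinarith
  have ha : 0 < 1 / T := by positivity
  have hb : 0 < 1 / T' := by positivity
  have e2b : 2 / T' = 2 * (1 / T') := by ring
  have hc : 0 < 2 / T' - 1 / T := by rw [e2b]; linarith
  have key := log_conc n β g hgm hg0 hlc (1 / T) (1 / T') (2 / T' - 1 / T) ha hc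
    (by rw [e2b]; ring) hiT hiT' hiTT
  rw [← hY, ← hY, ← hY] at key
  have hint : ∀ x, (g x ^ (1 / T') / Y (1 / T')) ^ 2 / (g x ^ (1 / T) / Y (1 / T))
      = (Y (1 / T) / Y (1 / T') ^ 2) * g x ^ (2 / T' - 1 / T) := by
    intro x
    rcases (hg0 x).eq_or_lt with h | h
    · rw [← h, Real.zero_rpow hb.ne', Real.zero_rpow ha.ne', Real.zero_rpow hc.ne']
      simp
    · rw [Real.rpow_sub h, e2b, two_mul, Real.rpow_add h]
      have := Real.rpow_pos_of_pos h (1 / T)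
      field_simp
  simp_rw [hint]
  rw [integral_const_mul, ← hY]
  have ratio : (1 / T') ^ 2 = (n / (n - 1)) * (1 / T * (2 / T' - 1 / T)) := by
    have hn1 : (n:ℝ) - 1 ≠ 0 := by linarith
    have hq1 : q - 1 ≠ 0 := by linarith
    have hq2 : q ^ 2 - 1 ≠ 0 := by rw [hs]; exact hn1
    have eT' : T' = T * (q - 1) / q := by rw [hT']; field_simp
    rw [← hs, eT']
    field_simp
    ring
  rw [ratio, mul_pow ((n : ℝ) / (n - 1))] at key
  have nb := num_bound n hn
  have eβ : 2 * β * (1 / T') = 2 * β / T' := by ring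
  rw [eβ] at key
  set A := Y (1 / T)
  set B := Y (1 / T')
  set C := Y (2 / T' - 1 / T)
  set D := (1 / T * (2 / T' - 1 / T)) ^ n with hD
  have D0 : 0 < D := by positivity
  have k2 : A * C ≤ Real.exp (2 * β / T') * (n / (n - 1)) ^ n * B ^ 2 := by
    refine le_of_mul_le_mul_left (key.trans (le_of_eq ?_)) D0
    ring
  have k3 : A / B ^ 2 * C = A * C / B ^ 2 := by ring
  rw [k3, div_le_iff₀ (by positivity)]
  refine k2.trans ?_
  rw [mul_comm (8:ℝ)]
  gcongr
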